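/- Let q be an odd prime power, F_q the finite field with q elements, and χ the quadratic character of F_q (χ(u) = 1 if u is a nonzero square, χ(u) = -1 if u is a nonsquare, χ(0) = 0). Let a, b, c, A, B, C, D ∈ F_q with c ≠ 0 and A ≠ 0, and define g(x) = x³ + a x² + b x + c, h(x) = (A−1) x³ + B x² + C x + D, and D_T(x) = g(x)² + x³ h(x). Suppose D_T(x) = A·∏_{i=1}^{6} (x − ρ_i) where ρ_1, …, ρ_6 are six distinct elements of F_q, each of which is a nonzero square in F_q. Then ∑_{x ∈ F_q} ∑_{t ∈ F_q} χ(x³ t² + 2 g(x) t − h(x)) = 6q. -/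

import Mathlib

/-!
For fixed `x ≠ 0` the polynomial `x³t² + 2 g(x) t - h(x)` is quadratic in `t` with reduced
discriminant `D_T(x)`. A quadratic `u t² + 2 v t - w` has character sum `(q - 1) χ(u)` when its
discriminant vanishes, and `-χ(u)` otherwise by the Jacobi sum evaluation `J(χ, χ⁻¹) = -χ(-1)`.
Since `χ(x³) = χ(x)` and `∑ₓ χ(x) = 0`, the generic terms cancel and only `q ∑ χ(ρ)` over the
roots `ρ` of `D_T` remains. The fibre `x = 0` is linear in `t`, as `g(0) ≠ 0`, and contributes `0`.
-/

open Finset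

section MulCharSums

variable {F R : Type*} [Field F] [Fintype F] [CommRing R] [IsDomain R]

theorem sum_mulChar_affine {χ : MulChar F R} (hχ : χ ≠ 1) {m : F} (hm : m ≠ 0) (n : F) :
    ∑ t, χ (m * t + n) = 0 :=
  (((Equiv.mulLeft₀ m hm).trans (Equiv.addRight n)).sum_comp χ).trans
    (MulChar.sum_eq_zero_of_ne_one hχ)

theorem sum_mulChar_mul_inv_sub {χ : MulChar F R} (hχ : χ ≠ 1) {d : F} (hd : d ≠ 0) :
    ∑ u, χ u * χ⁻¹ (u - d) = -1 := by
  have mul_inv_apply {x : F} (hx : x ≠ 0) : χ x * χ⁻¹ x = 1 := by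
    rw [← MulChar.mul_apply, mul_inv_cancel, MulChar.one_apply hx.isUnit]
  calc ∑ u, χ u * χ⁻¹ (u - d)
      = ∑ v, χ (d * v) * χ⁻¹ (d * v - d) :=
        (Equiv.sum_comp (Equiv.mulLeft₀ d hd) fun u => χ u * χ⁻¹ (u - d)).symm
    _ = ∑ v, χ⁻¹ (-1) * (χ v * χ⁻¹ (1 - v)) := by
        refine sum_congr rfl fun v _ => ?_
        rw [show d * v - d = d * (-1 * (1 - v)) by ring]
        simp only [map_mul]
        linear_combination χ v * χ⁻¹ (-1) * χ⁻¹ (1 - v) * mul_inv_apply hd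
    _ = χ⁻¹ (-1) * jacobiSum χ χ⁻¹ := (mul_sum ..).symm
    _ = -1 := by
        rw [jacobiSum_nontrivial_inv hχ, mul_neg, mul_comm, mul_inv_apply (by simp)]

end MulCharSums

theorem ringChar_ne_two_of_odd_card {F : Type*} [Field F] [Fintype F]
    (hF : Odd (Fintype.card F)) : ringChar F ≠ 2 := by
  rw [Ne, FiniteField.even_card_iff_char_two, ← Nat.even_iff, Nat.not_even_iff_odd]
  exact hF

theorem sum_filter_mul_prod_sub_eq_zero {R M ι : Type*} [CommRing R] [IsDomain R] [Fintype R]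
    [DecidableEq R] [AddCommMonoid M] [Fintype ι] {a : R} (ha : a ≠ 0) {ρ : ι → R}
    (hρ : Function.Injective ρ) (f : R → M) :
    ∑ x with a * ∏ i, (x - ρ i) = 0, f x = ∑ i, f (ρ i) := by
  have roots_eq_image : ({x | a * ∏ i, (x - ρ i) = 0} : Finset R) = univ.image ρ := by
    ext x
    simp [ha, prod_eq_zero_iff, sub_eq_zero, eq_comm (a := x)]
  rw [roots_eq_image, sum_image hρ.injOn]

section QuadraticChar

variable {F : Type*} [Field F] [Fintype F] [DecidableEq F]

theorem sum_comp_sq {M : Type*} [AddCommGroup M] (hF : ringChar F ≠ 2) (f : F → M) :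
    ∑ t, f (t ^ 2) = ∑ u, (quadraticChar F u + 1) • f u := by
  rw [← sum_fiberwise' univ (fun t : F => t ^ 2) f]
  refine sum_congr rfl fun u _ => ?_
  rw [sum_const, ← quadraticChar_card_sqrts hF, natCast_zsmul, Set.toFinset_ofPred]

theorem quadraticChar_pow_odd {k : ℕ} (hk : Odd k) (x : F) :
    quadraticChar F (x ^ k) = quadraticChar F x := by
  rw [map_pow, ← MulChar.pow_apply' _ hk.pos.ne', (quadraticChar_isQuadratic F).pow_odd hk]

theorem sum_quadraticChar_sq_sub (hF : ringChar F ≠ 2) (d : F) :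
    ∑ t, quadraticChar F (t ^ 2 - d) = (if d = 0 then (Fintype.card F : ℤ) else 0) - 1 := by
  split_ifs with hd
  · have sq_char (t : F) : quadraticChar F (t ^ 2 - d) = 1 - if t = 0 then 1 else 0 := by
      split_ifs with ht
      · simp [hd, ht]
      · rw [hd, sub_zero, quadraticChar_sq_one' ht, sub_zero]
    simp [sq_char]
  · have shift_sum : ∑ u, quadraticChar F (u - d) = 0 := by
      simpa [sub_eq_add_neg] using
        sum_mulChar_affine (quadraticChar_ne_one hF) one_ne_zero (-d)
    have correlation : ∑ u, quadraticChar F u * quadraticChar F (u - d) = -1 := by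
      simpa only [(quadraticChar_isQuadratic F).inv] using
        sum_mulChar_mul_inv_sub (quadraticChar_ne_one hF) hd
    rw [sum_comp_sq hF fun u => quadraticChar F (u - d)]
    simp only [smul_eq_mul, add_mul, one_mul, sum_add_distrib, shift_sum, correlation]
    norm_num

theorem sum_quadraticChar_quadratic (hF : ringChar F ≠ 2) {u v : F} (huv : u = 0 → v ≠ 0)
    (w : F) :
    ∑ t, quadraticChar F (u * t ^ 2 + 2 * v * t - w) =
      quadraticChar F u * ((if v ^ 2 + u * w = 0 then (Fintype.card F : ℤ) else 0) - 1) := by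
  rcases eq_or_ne u 0 with rfl | hu
  · simpa [sub_eq_add_neg] using sum_mulChar_affine (quadraticChar_ne_one hF)
      (mul_ne_zero (Ring.two_ne_zero hF) (huv rfl)) (-w)
  have complete_square (t : F) : quadraticChar F (u * t ^ 2 + 2 * v * t - w) =
      quadraticChar F u * quadraticChar F ((u * t + v) ^ 2 - (v ^ 2 + u * w)) := by
    rw [show (u * t + v) ^ 2 - (v ^ 2 + u * w) = u * (u * t ^ 2 + 2 * v * t - w) by ring,
      map_mul, ← mul_assoc, ← sq, quadraticChar_sq_one hu, one_mul]
  simp only [complete_square, ← mul_sum]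
  rw [← sum_quadraticChar_sq_sub hF]
  congr 1
  exact ((Equiv.mulLeft₀ u hu).trans (Equiv.addRight v)).sum_comp
    fun s => quadraticChar F (s ^ 2 - (v ^ 2 + u * w))

theorem sum_sum_quadraticChar_quadratic {ι : Type*} (hF : ringChar F ≠ 2) (s : Finset ι)
    {u v : ι → F} (huv : ∀ i ∈ s, u i = 0 → v i ≠ 0) (w : ι → F) :
    ∑ i ∈ s, ∑ t, quadraticChar F (u i * t ^ 2 + 2 * v i * t - w i) =
      Fintype.card F * ∑ i ∈ s with v i ^ 2 + u i * w i = 0, quadraticChar F (u i) -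
        ∑ i ∈ s, quadraticChar F (u i) := by
  rw [sum_congr rfl fun i hi => sum_quadraticChar_quadratic hF (huv i hi) (w i),
    sum_filter, mul_sum, ← sum_sub_distrib]
  refine sum_congr rfl fun i _ => ?_
  split_ifs <;> ring

theorem legendre_sum_rank_six_family_general (hF : ringChar F ≠ 2) {k : ℕ} (hk : Odd k)
    {g : F → F} (hg : g 0 ≠ 0) (h : F → F) :
    ∑ x, ∑ t, quadraticChar F (x ^ k * t ^ 2 + 2 * g x * t - h x) =
      Fintype.card F * ∑ x with g x ^ 2 + x ^ k * h x = 0, quadraticChar F x := by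
  have linear_of_degenerate : ∀ x ∈ univ, x ^ k = 0 → g x ≠ 0 := fun x _ hx =>
    (pow_eq_zero_iff hk.pos.ne').mp hx ▸ hg
  rw [sum_sum_quadraticChar_quadratic hF univ linear_of_degenerate]
  simp only [quadraticChar_pow_odd hk, quadraticChar_sum_zero hF, sub_zero]

end QuadraticChar

/-- **Character-sum computation for the rank-6 family.**
Let `q` be an odd prime power and `F` the finite field with `q` elements, with
quadratic character `quadraticChar F`.  Given `a b c A B C D : F` with `c ≠ 0`
and `A ≠ 0`, set `g x = x³ + a x² + b x + c`,
`h x = (A - 1) x³ + B x² + C x + D` and `D_T x = (g x)² + x³ * h x`.  If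
`D_T x = A * ∏ i, (x - ρ i)` for six distinct `ρ 1, …, ρ 6 ∈ F`, each a nonzero
square in `F`, then `∑ x, ∑ t, χ(x³ t² + 2 g(x) t − h(x)) = 6 q`. -/
theorem legendre_sum_rank_six_family (q : ℕ) (hq : Odd q)
    (F : Type*) [Field F] [Fintype F] [DecidableEq F] (hcard : Fintype.card F = q)
    (a b c A B C D : F) (hc : c ≠ 0) (hA : A ≠ 0)
    (g h : F → F)
    (hg : ∀ x, g x = x ^ 3 + a * x ^ 2 + b * x + c)
    (hh : ∀ x, h x = (A - 1) * x ^ 3 + B * x ^ 2 + C * x + D)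
    (ρ : Fin 6 → F) (hinj : Function.Injective ρ)
    (hρ : ∀ i, ρ i ≠ 0 ∧ IsSquare (ρ i))
    (hDT : ∀ x, (g x) ^ 2 + x ^ 3 * h x = A * ∏ i, (x - ρ i)) :
    ∑ x : F, ∑ t : F, quadraticChar F (x ^ 3 * t ^ 2 + 2 * g x * t - h x) = 6 * q := by
  have hχ (i : Fin 6) : quadraticChar F (ρ i) = 1 :=
    (quadraticChar_one_iff_isSquare (hρ i).1).mpr (hρ i).2
  rw [legendre_sum_rank_six_family_general (ringChar_ne_two_of_odd_card (hcard ▸ hq)) (by decide)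
    (by simpa [hg] using hc), hcard]
  simp_rw [hDT, sum_filter_mul_prod_sub_eq_zero hA hinj, hχ]
  simp [mul_comm]
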